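/- Let G be a finite simple graph and let H be a path-intersecting subgraph of G. Then H is an induced subgraph of G and H is isometric in G, i.e., for every pair of vertices u, v of H, the distance between u and v in H equals the distance between u and v in G. -/

import Mathlib

/-- A subgraph `H` of a simple graph `G` is *path-intersecting* if for every pair of
vertices `u v ∈ V_H` that are distinct and non-adjacent in `H`, there is no path `P`
in `G` from `u` to `v` whose edge set is disjoint from the edge set of `H` and whose
vertex set meets the vertex set of `H` exactly in `{u, v}`. -/
def SimpleGraph.Subgraph.PathIntersecting {V : Type*} {G : SimpleGraph V}
    (H : G.Subgraph) : Prop :=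
  ∀ ⦃u v : V⦄, u ∈ H.verts → v ∈ H.verts → u ≠ v → ¬ H.Adj u v →
    ∀ p : G.Walk u v, p.IsPath → (∀ e ∈ p.edges, e ∉ H.edgeSet) →
      ¬ (∀ w ∈ p.support, w ∈ H.verts → w = u ∨ w = v)

/-!
A walk of `G` between two distinct vertices of a path-intersecting subgraph `H` that meets `H` only
in its ends forces these ends to be adjacent in `H`: otherwise it contains no edge of `H`, and
shortening it to a path contradicts the definition. For a walk consisting of a single edge this
says that `H` is induced. In general, cut a walk of `G` between vertices of `H` at its visits to
`H`: each piece can be replaced by at most one edge of `H`, so distances in `H` are no longer than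
in `G`.
-/

section

open SimpleGraph

variable {V : Type*} {G : SimpleGraph V} {H : G.Subgraph} {u v : V}

theorem edist_map_le {W : Type*} {G' : SimpleGraph W} (f : G →g G') (u v : V) :
    G'.edist (f u) (f v) ≤ G.edist u v :=
  le_iInf fun p ↦ by simpa only [Walk.length_map] using edist_le (p.map f)

theorem notMem_edgeSet_of_mem_edges_of_not_adj (huv : ¬H.Adj u v) {p : G.Walk u v}
    (hp : ∀ w ∈ p.support, w ∈ H.verts → w = u ∨ w = v) {e : Sym2 V} (he : e ∈ p.edges) :
    e ∉ H.edgeSet := by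
  induction e with | _ a b
  intro (hab : H.Adj a b)
  have ha : a = u ∨ a = v := hp a (p.fst_mem_support_of_mem_edges he) hab.fst_mem
  have hb : b = u ∨ b = v := hp b (p.snd_mem_support_of_mem_edges he) hab.snd_mem
  rcases ha with rfl | rfl <;> rcases hb with rfl | rfl
  · exact hab.ne rfl
  · exact huv hab
  · exact huv hab.symm
  · exact hab.ne rfl

theorem adj_of_pathIntersecting_of_walk (hH : H.PathIntersecting) (hu : u ∈ H.verts)
    (hv : v ∈ H.verts) (hne : u ≠ v) (p : G.Walk u v)
    (hp : ∀ w ∈ p.support, w ∈ H.verts → w = u ∨ w = v) : H.Adj u v := by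
  classical
  by_contra huv
  have hbypass : ∀ w ∈ p.bypass.support, w ∈ H.verts → w = u ∨ w = v :=
    fun w hw ↦ hp w (p.support_bypass_subset_support hw)
  exact hH hu hv hne huv p.bypass p.bypass_isPath
    (fun _ ↦ notMem_edgeSet_of_mem_edges_of_not_adj huv hbypass) hbypass

theorem isInduced_of_pathIntersecting (hH : H.PathIntersecting) : H.IsInduced :=
  fun _ hu _ hv huv ↦ adj_of_pathIntersecting_of_walk hH hu hv huv.ne huv.toWalk
    fun _ hw _ ↦ by simpa using hw

theorem coe_edist_le_length_of_pathIntersecting (hH : H.PathIntersecting) (u v : H.verts)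
    (p : G.Walk (u : V) v) : H.coe.edist u v ≤ p.length := by
  classical
  induction hn : p.length using Nat.strong_induction_on generalizing u v with | _ n ih
  subst hn
  obtain rfl | hne := eq_or_ne u v
  · simp
  by_cases hp : ∀ w ∈ p.support, w ∈ H.verts → w = u ∨ w = v
  · have hne' : (u : V) ≠ v := Subtype.coe_ne_coe.mpr hne
    have huv : H.coe.Adj u v := adj_of_pathIntersecting_of_walk hH u.2 v.2 hne' p hp
    have hpos : 1 ≤ p.length :=
      Nat.one_le_iff_ne_zero.mpr fun h ↦ hne' (Walk.eq_of_length_eq_zero h)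
    rw [edist_eq_one_iff_adj.mpr huv]
    exact_mod_cast hpos
  · push Not at hp
    obtain ⟨w, hw, hwH, hwu, hwv⟩ := hp
    have htake : H.coe.edist u ⟨w, hwH⟩ ≤ (p.takeUntil w hw).length :=
      ih _ (p.length_takeUntil_lt_length hw hwv) u ⟨w, hwH⟩ _ rfl
    have hdrop : H.coe.edist ⟨w, hwH⟩ v ≤ (p.dropUntil w hw).length :=
      ih _ (p.length_dropUntil_lt_length hw hwu) ⟨w, hwH⟩ v _ rfl
    calc H.coe.edist u v
        ≤ H.coe.edist u ⟨w, hwH⟩ + H.coe.edist ⟨w, hwH⟩ v := SimpleGraph.edist_triangle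
      _ ≤ (p.takeUntil w hw).length + (p.dropUntil w hw).length := add_le_add htake hdrop
      _ = p.length := by rw [← Nat.cast_add, ← Walk.length_append, p.take_spec hw]

theorem coe_edist_eq_of_pathIntersecting (hH : H.PathIntersecting) (u v : H.verts) :
    H.coe.edist u v = G.edist u v :=
  le_antisymm (le_iInf (coe_edist_le_length_of_pathIntersecting hH u v)) (edist_map_le H.hom u v)

theorem induced_and_isometric_of_pathIntersecting_general (hH : H.PathIntersecting) :
    H.IsInduced ∧ ∀ u v : H.verts, H.coe.edist u v = G.edist u v :=
  ⟨isInduced_of_pathIntersecting hH, coe_edist_eq_of_pathIntersecting hH⟩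

end

/-- **Path-intersecting subgraphs are induced and isometric.**
Let `G` be a finite simple graph and `H` a path-intersecting subgraph of `G`.  Then `H`
is an induced subgraph of `G`, and `H` is isometric in `G`: for every pair of vertices
`u, v` of `H`, the distance between `u` and `v` in `H` equals their distance in `G`. -/
theorem induced_and_isometric_of_pathIntersecting {V : Type*} [Fintype V]
    (G : SimpleGraph V) (H : G.Subgraph) (hH : H.PathIntersecting) :
    H.IsInduced ∧
      ∀ (u v : V) (hu : u ∈ H.verts) (hv : v ∈ H.verts),
        H.coe.dist ⟨u, hu⟩ ⟨v, hv⟩ = G.dist u v :=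
  (induced_and_isometric_of_pathIntersecting_general hH).imp_right fun h u v hu hv ↦
    congrArg ENat.toNat (h ⟨u, hu⟩ ⟨v, hv⟩)
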